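/- Let X and Y be finitely supported random variables (jointly distributed) such that the support of Y has cardinality at most 2^λ. Then H̃∞(X|Y) ≥ H∞(X,Y) − λ ≥ H∞(X) − λ. -/

import Mathlib

open scoped Classical BigOperators

/-- Probability of an event `E` under a finitely supported probability mass function `p`. -/
noncomputable def pr {Ω : Type*} [Fintype Ω] (p : Ω → ℝ) (E : Ω → Prop) : ℝ :=
  ∑ ω : Ω, if E ω then p ω else 0

/-- Min-entropy `H∞(X) = -log₂ max_x Pr[X = x]`. -/
noncomputable def minEntropy {Ω α : Type*} [Fintype Ω] [Fintype α]
    (p : Ω → ℝ) (X : Ω → α) : ℝ :=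
  - Real.logb 2 (⨆ x : α, pr p (fun ω => X ω = x))

/-- Conditional (average) min-entropy
`H̃∞(X|Z) = -log₂ Σ_z Pr[Z=z] · max_x Pr[X=x | Z=z] = -log₂ Σ_z max_x Pr[X=x ∧ Z=z]`. -/
noncomputable def condMinEntropy {Ω α β : Type*} [Fintype Ω] [Fintype α] [Fintype β]
    (p : Ω → ℝ) (X : Ω → α) (Z : Ω → β) : ℝ :=
  - Real.logb 2 (∑ z : β, ⨆ x : α, pr p (fun ω => X ω = x ∧ Z ω = z))

/-!
Up to `-log₂`, min-entropies are guessing probabilities: with `G(X) = max_x Pr[X = x]` and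
`G(X|Y) = ∑_y max_x Pr[X = x, Y = y]`, each summand of `G(X|Y)` is at most `G(X, Y)`, and only the
`y` in the support of `Y` contribute, so `G(X|Y) ≤ |supp Y| · G(X, Y)`. Guessing the pair is
at least as hard as guessing its first component, so `G(X, Y) ≤ G(X)`.
-/

section Probability

variable {Ω : Type*} [Fintype Ω] {p : Ω → ℝ}

theorem pr_nonneg (hp : 0 ≤ p) (E : Ω → Prop) : 0 ≤ pr p E :=
  Finset.sum_nonneg fun ω _ => ite_nonneg (hp ω) le_rfl

theorem pr_mono (hp : 0 ≤ p) {E F : Ω → Prop} (h : ∀ ω, E ω → F ω) : pr p E ≤ pr p F := by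
  simp only [pr, ← Finset.sum_filter]
  exact Finset.sum_le_sum_of_subset_of_nonneg (Finset.monotone_filter_right _ fun ω _ => h ω)
    fun ω _ _ => hp ω

theorem apply_le_pr (hp : 0 ≤ p) {E : Ω → Prop} {ω : Ω} (h : E ω) : p ω ≤ pr p E := by
  rw [pr, ← Finset.sum_filter]
  exact Finset.single_le_sum (fun ω _ => hp ω) (by simpa using h)

theorem pr_le_iSup_pr {ι : Type*} (p : Ω → ℝ) (E : ι → Ω → Prop) (i : ι) :
    pr p (E i) ≤ ⨆ j, pr p (E j) := by
  -- `Ω` is finite, so it has only finitely many events, whatever the index type.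
  have hfin : (Set.range fun j => pr p (E j)).Finite :=
    (Set.finite_range (pr p)).subset (Set.range_comp_subset_range E (pr p))
  exact le_ciSup hfin.bddAbove i

end Probability

section GuessingProbability

variable {Ω α β γ : Type*} [Fintype Ω] {p : Ω → ℝ}

/-- The guessing probability `max_x Pr[X = x]`: the best chance of predicting `X` with no side
information. It is the quantity whose `-log₂` is the min-entropy of `X`. -/
noncomputable def guessProb (p : Ω → ℝ) (X : Ω → α) : ℝ :=
  ⨆ x : α, pr p (fun ω => X ω = x)

/-- The average guessing probability `∑_y max_x Pr[X = x, Y = y]`: the best chance of predicting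
`X` after observing `Y`. It is the quantity whose `-log₂` is the conditional min-entropy. Joint
probabilities avoid conditioning on values of `Y` of probability zero. -/
noncomputable def condGuessProb [Fintype β] (p : Ω → ℝ) (X : Ω → α) (Y : Ω → β) : ℝ :=
  ∑ y : β, ⨆ x : α, pr p (fun ω => X ω = x ∧ Y ω = y)

/-- The support of the random variable `Y`: the values it takes with positive probability. -/
noncomputable def probSupport [Fintype β] (p : Ω → ℝ) (Y : Ω → β) : Finset β :=
  Finset.univ.filter (fun y : β => 0 < pr p (fun ω => Y ω = y))

theorem minEntropy_eq_neg_logb_guessProb [Fintype α] (p : Ω → ℝ) (X : Ω → α) :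
    minEntropy p X = -Real.logb 2 (guessProb p X) :=
  rfl

theorem condMinEntropy_eq_neg_logb_condGuessProb [Fintype α] [Fintype β] (p : Ω → ℝ)
    (X : Ω → α) (Y : Ω → β) :
    condMinEntropy p X Y = -Real.logb 2 (condGuessProb p X Y) :=
  rfl

theorem pr_eq_le_guessProb (p : Ω → ℝ) (X : Ω → α) (x : α) :
    pr p (fun ω => X ω = x) ≤ guessProb p X :=
  pr_le_iSup_pr p (fun x ω => X ω = x) x

theorem guessProb_nonneg (hp : 0 ≤ p) (X : Ω → α) : 0 ≤ guessProb p X :=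
  Real.iSup_nonneg fun _ => pr_nonneg hp _

theorem guessProb_pos (hp : 0 < p) (X : Ω → α) : 0 < guessProb p X := by
  obtain ⟨hp_nonneg, ω, hω⟩ := Pi.lt_def.mp hp
  calc
    0 < p ω := hω
    _ ≤ pr p (fun ω' => X ω' = X ω) := apply_le_pr hp_nonneg rfl
    _ ≤ guessProb p X := pr_eq_le_guessProb p X (X ω)

theorem guessProb_le_guessProb_comp (hp : 0 ≤ p) (X : Ω → α) (f : α → γ) :
    guessProb p X ≤ guessProb p (fun ω => f (X ω)) := by
  refine Real.iSup_le (fun x => ?_) (guessProb_nonneg hp _)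
  calc
    pr p (fun ω => X ω = x) ≤ pr p (fun ω => f (X ω) = f x) := pr_mono hp fun _ => congrArg f
    _ ≤ guessProb p (fun ω => f (X ω)) := pr_eq_le_guessProb p _ (f x)

theorem pr_and_le_guessProb_prodMk (p : Ω → ℝ) (X : Ω → α) (Y : Ω → β) (x : α) (y : β) :
    pr p (fun ω => X ω = x ∧ Y ω = y) ≤ guessProb p (fun ω => (X ω, Y ω)) := by
  simpa only [Prod.mk.injEq] using pr_eq_le_guessProb p (fun ω => (X ω, Y ω)) (x, y)

theorem guessProb_prodMk_le_condGuessProb [Fintype β] (hp : 0 ≤ p) (X : Ω → α) (Y : Ω → β) :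
    guessProb p (fun ω => (X ω, Y ω)) ≤ condGuessProb p X Y := by
  have hsup_nonneg (y : β) : 0 ≤ ⨆ x, pr p (fun ω => X ω = x ∧ Y ω = y) :=
    Real.iSup_nonneg fun _ => pr_nonneg hp _
  refine Real.iSup_le (fun ⟨x, y⟩ => ?_) (Finset.sum_nonneg fun y _ => hsup_nonneg y)
  simp only [Prod.mk.injEq]
  calc
    pr p (fun ω => X ω = x ∧ Y ω = y)
        ≤ ⨆ x, pr p (fun ω => X ω = x ∧ Y ω = y) :=
      pr_le_iSup_pr p (fun x ω => X ω = x ∧ Y ω = y) x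
    _ ≤ condGuessProb p X Y := Finset.single_le_sum (fun y _ => hsup_nonneg y) (Finset.mem_univ y)

theorem condGuessProb_le_card_mul_guessProb_prodMk [Fintype β] (hp : 0 ≤ p) (X : Ω → α)
    (Y : Ω → β) :
    condGuessProb p X Y ≤
      (probSupport p Y).card * guessProb p (fun ω => (X ω, Y ω)) := by
  have hsup_le (y : β) : ⨆ x, pr p (fun ω => X ω = x ∧ Y ω = y) ≤
      if 0 < pr p (fun ω => Y ω = y) then guessProb p (fun ω => (X ω, Y ω)) else 0 := by
    split_ifs with hy
    · exact Real.iSup_le (fun x => pr_and_le_guessProb_prodMk p X Y x y) (guessProb_nonneg hp _)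
    · exact Real.iSup_le (fun _ => (pr_mono hp fun _ h => h.2).trans (not_lt.mp hy)) le_rfl
  calc
    condGuessProb p X Y
        ≤ ∑ y : β,
          if 0 < pr p (fun ω => Y ω = y) then guessProb p (fun ω => (X ω, Y ω)) else 0 :=
      Finset.sum_le_sum fun y _ => hsup_le y
    _ = (probSupport p Y).card * guessProb p (fun ω => (X ω, Y ω)) := by
      rw [← Finset.sum_filter, Finset.sum_const, nsmul_eq_mul, probSupport]

theorem probSupport_nonempty [Fintype β] (hp : 0 < p) (Y : Ω → β) : (probSupport p Y).Nonempty := by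
  obtain ⟨hp_nonneg, ω, hω⟩ := Pi.lt_def.mp hp
  have hYω : 0 < pr p (fun ω' => Y ω' = Y ω) := hω.trans_le (apply_le_pr hp_nonneg rfl)
  exact ⟨Y ω, Finset.mem_filter.mpr ⟨Finset.mem_univ _, hYω⟩⟩

end GuessingProbability

section MinEntropy

variable {Ω α β γ : Type*} [Fintype Ω] [Fintype α] {p : Ω → ℝ}

theorem minEntropy_comp_le_minEntropy [Fintype γ] (hp : 0 < p) (X : Ω → α) (f : α → γ) :
    minEntropy p (fun ω => f (X ω)) ≤ minEntropy p X := by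
  rw [minEntropy_eq_neg_logb_guessProb, minEntropy_eq_neg_logb_guessProb, neg_le_neg_iff]
  exact Real.logb_le_logb_of_le one_lt_two (guessProb_pos hp X)
    (guessProb_le_guessProb_comp hp.le X f)

theorem minEntropy_prodMk_sub_logb_card_le_condMinEntropy [Fintype β] (hp : 0 < p)
    (X : Ω → α) (Y : Ω → β) :
    minEntropy p (fun ω => (X ω, Y ω)) - Real.logb 2 (probSupport p Y).card ≤
      condMinEntropy p X Y := by
  have hguess := guessProb_pos hp (fun ω => (X ω, Y ω))
  have hcond : 0 < condGuessProb p X Y :=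
    hguess.trans_le (guessProb_prodMk_le_condGuessProb hp.le X Y)
  have hcard := Nat.cast_ne_zero (R := ℝ).mpr (probSupport_nonempty hp Y).card_ne_zero
  have hlog := Real.logb_le_logb_of_le one_lt_two hcond
    (condGuessProb_le_card_mul_guessProb_prodMk hp.le X Y)
  rw [Real.logb_mul hcard hguess.ne'] at hlog
  rw [minEntropy_eq_neg_logb_guessProb, condMinEntropy_eq_neg_logb_condGuessProb]
  linarith

end MinEntropy

/-- If the support of `Y` has cardinality at most `2^λ`, then
`H̃∞(X|Y) ≥ H∞(X,Y) − λ ≥ H∞(X) − λ`. -/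
theorem stmt0 {Ω α β : Type*} [Fintype Ω] [Fintype α] [Fintype β]
    (p : Ω → ℝ) (hp : ∀ ω, 0 ≤ p ω) (hp1 : (∑ ω : Ω, p ω) = 1)
    (X : Ω → α) (Y : Ω → β) (lam : ℝ)
    (hsupp : ((Finset.univ.filter
        (fun y : β => 0 < pr p (fun ω => Y ω = y))).card : ℝ) ≤ (2 : ℝ) ^ lam) :
    condMinEntropy p X Y ≥ minEntropy p (fun ω => (X ω, Y ω)) - lam ∧
      minEntropy p (fun ω => (X ω, Y ω)) - lam ≥ minEntropy p X - lam := by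
  have hp_pos : 0 < p := lt_of_le_of_ne hp (by rintro rfl; simp at hp1)
  have hcard_pos : (0 : ℝ) < (probSupport p Y).card :=
    Nat.cast_pos.mpr (probSupport_nonempty hp_pos Y).card_pos
  have hlog_card : Real.logb 2 (probSupport p Y).card ≤ lam :=
    (Real.logb_le_iff_le_rpow one_lt_two hcard_pos).mpr hsupp
  constructor
  · calc
      minEntropy p (fun ω => (X ω, Y ω)) - lam
          ≤ minEntropy p (fun ω => (X ω, Y ω)) - Real.logb 2 (probSupport p Y).card :=
        sub_le_sub_left hlog_card _
      _ ≤ condMinEntropy p X Y := minEntropy_prodMk_sub_logb_card_le_condMinEntropy hp_pos X Y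
  · exact sub_le_sub_right
      (minEntropy_comp_le_minEntropy hp_pos (fun ω => (X ω, Y ω)) Prod.fst) lam
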